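/- Let A and B be n×n Hermitian positive semidefinite complex matrices, and let p, q be nonnegative integers with min(p,q) ≤ 2. Then Tr(S_{p,q}(A,B)) ≥ 0. -/

import Mathlib

/-!
A word with at most two letters `A` and all other letters `B` has nonnegative trace: by
cyclicity the trace is `Tr (B ^ k)`, `Tr (A * B ^ k)` or `Tr ((A * B ^ j * A) * B ^ k)`, and each
is the trace of a product of two positive semidefinite matrices (`trace_mul_nonneg`).
Hence for `p ≤ 2` the trace of `S p q A B` is a sum of nonnegative terms. This is carried out by
induction on `q` with the Pascal-type recursion `S_succ_succ`, which splits off the last letter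
of each word; the induction is for `Tr (S p q A B * B ^ k)` with `k` arbitrary, so that a split-off
`B` can be absorbed. The case `q ≤ 2` follows from the symmetry `S_swap`.
-/

open Polynomial Matrix ComplexOrder

/-- `S p q A B` is the sum of all `(p+q).choose p` words in `A, B` with `p` letters `A` and
`q` letters `B`; equivalently, the coefficient of `t^q` in `(A + t B)^(p+q)`. -/
noncomputable def S {n : ℕ} (p q : ℕ) (A B : Matrix (Fin n) (Fin n) ℂ) :
    Matrix (Fin n) (Fin n) ℂ :=
  ((Polynomial.C A + Polynomial.X * Polynomial.C B) ^ (p + q)).coeff q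

theorem coeff_linear_pow_succ_succ {n : ℕ} (A B : Matrix (Fin n) (Fin n) ℂ) (m q : ℕ) :
    ((C A + X * C B) ^ (m + 1)).coeff (q + 1) =
      ((C A + X * C B) ^ m).coeff (q + 1) * A + ((C A + X * C B) ^ m).coeff q * B := by
  rw [pow_succ, mul_add, ← mul_assoc, coeff_add, coeff_mul_C, coeff_mul_C, coeff_mul_X]

theorem coeff_linear_pow_succ_zero {n : ℕ} (A B : Matrix (Fin n) (Fin n) ℂ) (m : ℕ) :
    ((C A + X * C B) ^ (m + 1)).coeff 0 = ((C A + X * C B) ^ m).coeff 0 * A := by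
  rw [pow_succ, mul_add, ← mul_assoc, coeff_add, coeff_mul_C, coeff_mul_C, coeff_mul_X_zero,
    zero_mul, add_zero]

theorem coeff_linear_pow_of_lt {n : ℕ} (A B : Matrix (Fin n) (Fin n) ℂ) (m q : ℕ) (h : m < q) :
    ((C A + X * C B) ^ m).coeff q = 0 := by
  induction m generalizing q with
  | zero => rw [pow_zero, coeff_one, if_neg (by omega)]
  | succ m ih =>
    obtain ⟨q, rfl⟩ : ∃ r, q = r + 1 := ⟨q - 1, by omega⟩
    rw [coeff_linear_pow_succ_succ, ih _ (by omega), ih _ (by omega), zero_mul, zero_mul, add_zero]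

/-- Pascal-type recursion: the words are split according to their last letter, `B` or `A`. -/
theorem S_succ_succ {n : ℕ} (A B : Matrix (Fin n) (Fin n) ℂ) (p q : ℕ) :
    S (p + 1) (q + 1) A B = S (p + 1) q A B * B + S p (q + 1) A B * A := by
  have h₁ : p + 1 + (q + 1) = (p + 1 + q) + 1 := by ring
  have h₂ : p + (q + 1) = p + 1 + q := by ring
  rw [S, S, S, h₁, h₂, coeff_linear_pow_succ_succ, add_comm]

theorem S_zero_right {n : ℕ} (A B : Matrix (Fin n) (Fin n) ℂ) (p : ℕ) :
    S p 0 A B = A ^ p := by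
  induction p with
  | zero => simp [S]
  | succ p ih =>
    rw [pow_succ, ← ih]
    exact coeff_linear_pow_succ_zero A B p

theorem S_zero_left {n : ℕ} (A B : Matrix (Fin n) (Fin n) ℂ) (q : ℕ) :
    S 0 q A B = B ^ q := by
  induction q with
  | zero => simp [S]
  | succ q ih =>
    have h : 0 + (q + 1) = (0 + q) + 1 := by ring
    rw [pow_succ, ← ih, S, S, h, coeff_linear_pow_succ_succ,
      coeff_linear_pow_of_lt A B (0 + q) (q + 1) (by omega), zero_mul, zero_add]

theorem S_swap {n : ℕ} (A B : Matrix (Fin n) (Fin n) ℂ) (p q : ℕ) :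
    S p q A B = S q p B A := by
  induction p generalizing q with
  | zero => rw [S_zero_left, S_zero_right]
  | succ p ihp =>
    induction q with
    | zero => rw [S_zero_left, S_zero_right]
    | succ q ihq => rw [S_succ_succ, S_succ_succ, ihq, ihp, add_comm]

open scoped MatrixOrder in
theorem trace_mul_nonneg {n : ℕ} {M N : Matrix (Fin n) (Fin n) ℂ}
    (hM : M.PosSemidef) (hN : N.PosSemidef) : 0 ≤ (M * N).trace := by
  -- Writing `N = Dᴴ * D`, cyclicity turns the trace into that of `D * M * Dᴴ`.
  obtain ⟨D, rfl⟩ := CStarAlgebra.nonneg_iff_eq_star_mul_self.mp hN.nonneg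
  rw [← mul_assoc, trace_mul_comm, ← mul_assoc]
  exact (hM.mul_mul_conjTranspose_same D).trace_nonneg

section

variable {n : ℕ} {A B : Matrix (Fin n) (Fin n) ℂ}

theorem trace_word_one_nonneg (hA : A.PosSemidef) (hB : B.PosSemidef) (i k : ℕ) :
    0 ≤ (B ^ i * A * B ^ k).trace := by
  rw [trace_mul_comm, ← mul_assoc, ← pow_add, trace_mul_comm]
  exact trace_mul_nonneg hA (hB.pow _)

theorem trace_word_two_nonneg (hA : A.PosSemidef) (hB : B.PosSemidef) (i j k : ℕ) :
    0 ≤ (B ^ i * A * (B ^ j * A * B ^ k)).trace := by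
  have hP : (A * B ^ j * A).PosSemidef := by
    have h := (hB.pow j).conjTranspose_mul_mul_same A
    rwa [hA.isHermitian.eq] at h
  have h : (B ^ i * A * (B ^ j * A * B ^ k)).trace = ((A * B ^ j * A) * B ^ (k + i)).trace := by
    rw [pow_add, ← mul_assoc _ (B ^ k), trace_mul_comm _ (B ^ i)]
    simp only [mul_assoc]
  rw [h]
  exact trace_mul_nonneg hP (hB.pow _)

theorem trace_S_one_mul_nonneg (hA : A.PosSemidef) (hB : B.PosSemidef) (q k : ℕ) :
    0 ≤ (S 1 q A B * B ^ k).trace := by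
  induction q generalizing k with
  | zero => simpa [S_zero_right] using trace_word_one_nonneg hA hB 0 k
  | succ q ih =>
    rw [S_succ_succ, S_zero_left, add_mul, trace_add, mul_assoc _ B, ← pow_succ']
    exact add_nonneg (ih _) (trace_word_one_nonneg hA hB _ _)

/-- The matrix here is the part of `S 2 (q + j + k) A B` made of the words whose second `A` is
followed by exactly `k` letters `B` and immediately preceded by at least `j` of them. -/
theorem trace_S_one_mul_word_nonneg (hA : A.PosSemidef) (hB : B.PosSemidef) (q j k : ℕ) :
    0 ≤ (S 1 q A B * (B ^ j * A * B ^ k)).trace := by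
  induction q generalizing j with
  | zero => simpa [S_zero_right] using trace_word_two_nonneg hA hB 0 j k
  | succ q ih =>
    have h : B * (B ^ j * A * B ^ k) = B ^ (j + 1) * A * B ^ k := by
      rw [pow_succ']; simp only [mul_assoc]
    rw [S_succ_succ, S_zero_left, add_mul, trace_add, mul_assoc _ B, h]
    exact add_nonneg (ih _) (trace_word_two_nonneg hA hB _ _ _)

theorem trace_S_two_mul_nonneg (hA : A.PosSemidef) (hB : B.PosSemidef) (q k : ℕ) :
    0 ≤ (S 2 q A B * B ^ k).trace := by
  induction q generalizing k with
  | zero =>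
    rw [S_zero_right]
    exact trace_mul_nonneg (hA.pow 2) (hB.pow k)
  | succ q ih =>
    rw [S_succ_succ, add_mul, trace_add, mul_assoc _ B, ← pow_succ', mul_assoc _ A]
    refine add_nonneg (ih _) ?_
    simpa using trace_S_one_mul_word_nonneg hA hB (q + 1) 0 k

theorem trace_S_nonneg_of_le_two (hA : A.PosSemidef) (hB : B.PosSemidef) (p q : ℕ) (hp : p ≤ 2) :
    0 ≤ (S p q A B).trace := by
  interval_cases p
  · rw [S_zero_left]
    exact (hB.pow q).trace_nonneg
  · simpa using trace_S_one_mul_nonneg hA hB q 0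
  · simpa using trace_S_two_mul_nonneg hA hB q 0

end

/-- For Hermitian positive semidefinite `A, B` and `min(p,q) ≤ 2`,
`Tr(S_{p,q}(A,B)) ≥ 0`. -/
theorem stmt_15 {n : ℕ} (A B : Matrix (Fin n) (Fin n) ℂ)
    (hA : A.PosSemidef) (hB : B.PosSemidef) (p q : ℕ) (hpq : min p q ≤ 2) :
    0 ≤ (S p q A B).trace := by
  rcases min_le_iff.mp hpq with h | h
  · exact trace_S_nonneg_of_le_two hA hB p q h
  · rw [S_swap]
    exact trace_S_nonneg_of_le_two hB hA q p h
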